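/- arXiv:2412.04221 — 2 statements merged into one kernel-verified Lean document; each statement's English description precedes it below -/
import Mathlib

section
/- Let k be an algebraically closed field, L a finite group of order invertible in k, Q a finite group, and H = L × Q. With V⃗ = V ⊗_k kQ viewed as a (kH, kQ)-bimodule and V⃖ = V* ⊗_k kQ as a (kQ, kH)-bimodule (with actions as above), the direct sum over a set of representatives V of isomorphism classes of irreducible kL-modules of V⃗ ⊗_{kQ} V⃖ is isomorphic, as a (kH, kH)-bimodule, to the identity bimodule kH. -/
open TensorProduct MulOpposite

/-- Irreducibility of a representation. -/
def IsIrreducibleRep (k : Type) [CommRing k] (G : Type) [Group G] {V : Type}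
    [AddCommGroup V] [Module k V] (ρ : Representation k G V) : Prop :=
  Nontrivial V ∧ ∀ q : Submodule k V, (∀ g v, v ∈ q → ρ g v ∈ q) → q = ⊥ ∨ q = ⊤

/-- The balancing relations defining `M ⊗_{kG} N` inside `M ⊗[k] N`, for a right `kG`-module
`M` (a representation of `Gᵐᵒᵖ`) and a left `kG`-module `N`;  `M ⊗_{kG} N` is the quotient of
`M ⊗[k] N` by this submodule. -/
def balancedRel (k : Type) [Field k] (G : Type) [Group G]
    {M N : Type} [AddCommMonoid M] [Module k M] [AddCommMonoid N] [Module k N]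
    (σ : Representation k Gᵐᵒᵖ M) (ρ : Representation k G N) :
    Submodule k (M ⊗[k] N) :=
  Submodule.span k {x | ∃ (g : G) (m : M) (n : N),
    x = σ (op g) m ⊗ₜ[k] n + (-1 : k) • (m ⊗ₜ[k] ρ g n)}

section Aux

theorem aux_schur_bij {k L V W : Type} [Field k] [Group L] [AddCommGroup V] [Module k V]
    [AddCommGroup W] [Module k W] (ρ : Representation k L V) (τ : Representation k L W)
    (hV : IsIrreducibleRep k L ρ) (hW : IsIrreducibleRep k L τ) (T : V →ₗ[k] W)
    (hT : ∀ l v, T (ρ l v) = τ l (T v)) : T = 0 ∨ Function.Bijective T := by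
  rcases hV.2 (LinearMap.ker T) (fun g v hv => by
    rw [LinearMap.mem_ker] at hv ⊢; rw [hT, hv, map_zero]) with h | h
  · rcases hW.2 (LinearMap.range T) (by
      rintro g _ ⟨v, rfl⟩; exact ⟨ρ g v, hT g v⟩) with h' | h'
    · left; exact LinearMap.range_eq_bot.1 h'
    · right; exact ⟨LinearMap.ker_eq_bot.1 h, LinearMap.range_eq_top.1 h'⟩
  · left; exact LinearMap.ker_eq_top.1 h

theorem aux_schur_scalar {k L V : Type} [Field k] [IsAlgClosed k] [Group L] [AddCommGroup V]
    [Module k V] [FiniteDimensional k V] (ρ : Representation k L V)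
    (hV : IsIrreducibleRep k L ρ) (T : V →ₗ[k] V)
    (hT : ∀ l v, T (ρ l v) = ρ l (T v)) : ∃ c : k, ∀ v, T v = c • v := by
  have := hV.1
  obtain ⟨c, hc⟩ := Module.End.exists_eigenvalue T
  refine ⟨c, fun v => ?_⟩
  rcases hV.2 (Module.End.eigenspace T c) (fun g v hv => by
    rw [Module.End.mem_eigenspace_iff] at hv ⊢; rw [hT, hv, map_smul]) with h | h
  · exact absurd h hc
  · exact Module.End.mem_eigenspace_iff.1 (h ▸ Submodule.mem_top)

/-- The averaged rank one map `v ↦ ∑ l, α (l⁻¹ v) • l w`. -/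
noncomputable def auxAvg {k L V W : Type} [Field k] [Group L] [Fintype L] [AddCommGroup V]
    [Module k V] [AddCommGroup W] [Module k W]
    (ρ : Representation k L V) (τ : Representation k L W)
    (α : Module.Dual k V) (w : W) : V →ₗ[k] W :=
  ∑ l : L, τ l ∘ₗ (α.smulRight w) ∘ₗ ρ l⁻¹

theorem auxAvg_apply {k L V W : Type} [Field k] [Group L] [Fintype L] [AddCommGroup V]
    [Module k V] [AddCommGroup W] [Module k W]
    (ρ : Representation k L V) (τ : Representation k L W)
    (α : Module.Dual k V) (w : W) (v : V) :
    auxAvg ρ τ α w v = ∑ l : L, α (ρ l⁻¹ v) • τ l w := by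
  simp [auxAvg]

theorem auxAvg_comm {k L V W : Type} [Field k] [Group L] [Fintype L] [AddCommGroup V]
    [Module k V] [AddCommGroup W] [Module k W]
    (ρ : Representation k L V) (τ : Representation k L W)
    (α : Module.Dual k V) (w : W) (g : L) (v : V) :
    auxAvg ρ τ α w (ρ g v) = τ g (auxAvg ρ τ α w v) := by
  rw [auxAvg_apply, auxAvg_apply, map_sum]
  refine Fintype.sum_bijective (g⁻¹ * ·) (Group.mulLeft_bijective g⁻¹) _ _ fun l => ?_
  simp only [map_smul]
  rw [← Module.End.mul_apply, ← map_mul, ← Module.End.mul_apply, ← map_mul]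
  simp

theorem auxAvg_trace {k L V : Type} [Field k] [Group L] [Fintype L] [AddCommGroup V]
    [Module k V] [FiniteDimensional k V] (ρ : Representation k L V)
    (α : Module.Dual k V) (w : V) :
    LinearMap.trace k V (auxAvg ρ ρ α w) = (Fintype.card L : k) * α w := by
  have h : ∀ l : L, LinearMap.trace k V (ρ l ∘ₗ (α.smulRight w) ∘ₗ ρ l⁻¹) = α w := by
    intro l
    rw [LinearMap.trace_comp_comm', LinearMap.comp_assoc, ← Module.End.mul_eq_comp (ρ l⁻¹),
      ← map_mul]
    simp [Module.End.one_eq_id]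
  simp [auxAvg, h]

theorem aux_orth {k L V : Type} [Field k] [IsAlgClosed k] [Group L] [Fintype L]
    (hL : (Fintype.card L : k) ≠ 0) [AddCommGroup V]
    [Module k V] [FiniteDimensional k V] (ρ : Representation k L V)
    (hV : IsIrreducibleRep k L ρ) :
    ∃ c : k, c ≠ 0 ∧ ∀ (α : Module.Dual k V) (w v : V),
      ∑ l : L, α (ρ l⁻¹ v) • ρ l w = c • α w • v := by
  have key : ∀ (α : Module.Dual k V) (w : V), ∃ c : k, (∀ v, auxAvg ρ ρ α w v = c • v) ∧
      c * (Module.finrank k V : k) = (Fintype.card L : k) * α w := by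
    intro α w
    obtain ⟨c, hc⟩ := aux_schur_scalar ρ hV (auxAvg ρ ρ α w) (auxAvg_comm ρ ρ α w)
    refine ⟨c, hc, ?_⟩
    rw [← auxAvg_trace ρ]
    have : auxAvg ρ ρ α w = c • LinearMap.id := by ext v; simp [hc]
    rw [this, map_smul, LinearMap.trace_id, smul_eq_mul]
  have := hV.1
  have hd : (Module.finrank k V : k) ≠ 0 := by
    intro h0
    obtain ⟨w, hw⟩ := exists_ne (0 : V)
    obtain ⟨α, hα⟩ : ∃ α : Module.Dual k V, α w ≠ 0 := by
      by_contra! h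
      exact hw ((Module.forall_dual_apply_eq_zero_iff k w).1 h)
    obtain ⟨c, -, hc⟩ := key α w
    rw [h0, mul_zero] at hc
    exact mul_ne_zero hL hα hc.symm
  refine ⟨(Fintype.card L : k) / Module.finrank k V, div_ne_zero hL hd, fun α w v => ?_⟩
  obtain ⟨c, h1, h2⟩ := key α w
  rw [← auxAvg_apply, h1, smul_smul]
  congr 1
  field_simp
  exact h2

/-- Matrix coefficients. -/
noncomputable def auxCoef {k L V : Type} [Field k] [Group L] [AddCommGroup V]
    [Module k V] (ρ : Representation k L V) : V ⊗[k] Module.Dual k V →ₗ[k] (L → k) :=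
  TensorProduct.lift (LinearMap.mk₂ k (fun v α l => α (ρ l⁻¹ v))
    (by intros; ext; simp) (by intros; ext; simp) (by intros; ext; simp) (by intros; ext; simp))

@[simp] theorem auxCoef_tmul {k L V : Type} [Field k] [Group L] [AddCommGroup V]
    [Module k V] (ρ : Representation k L V) (v : V) (α : Module.Dual k V) (l : L) :
    auxCoef ρ (v ⊗ₜ α) l = α (ρ l⁻¹ v) := rfl

/-- Total matrix coefficient map. -/
noncomputable def auxTot {k L ι : Type} [Field k] [Group L] [DecidableEq ι] {V : ι → Type}
    [∀ i, AddCommGroup (V i)] [∀ i, Module k (V i)] (ρ : ∀ i, Representation k L (V i)) :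
    (DirectSum ι fun i => V i ⊗[k] Module.Dual k (V i)) →ₗ[k] (L → k) :=
  DirectSum.toModule k ι (L → k) (fun i => auxCoef (ρ i))

/-- A function on `L` acting on a representation. -/
noncomputable def auxAct {k L V : Type} [Field k] [Group L] [Fintype L] [AddCommGroup V]
    [Module k V] (ρ : Representation k L V) : (L → k) →ₗ[k] (V →ₗ[k] V) where
  toFun f := ∑ l, f l • ρ l
  map_add' f g := by simp [add_smul, Finset.sum_add_distrib]
  map_smul' c f := by simp [Finset.smul_sum, smul_smul]

theorem auxTot_injective {k L ι : Type} [Field k] [IsAlgClosed k] [Group L] [Fintype L]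
    (hL : (Fintype.card L : k) ≠ 0) [DecidableEq ι] {V : ι → Type}
    [∀ i, AddCommGroup (V i)] [∀ i, Module k (V i)] [∀ i, FiniteDimensional k (V i)]
    (ρ : ∀ i, Representation k L (V i)) (hirr : ∀ i, IsIrreducibleRep k L (ρ i))
    (hpair : ∀ i j, i ≠ j →
      ¬ ∃ e : V i ≃ₗ[k] V j, ∀ l v, e (ρ i l v) = ρ j l (e v)) :
    Function.Injective (auxTot ρ) := by
  rw [← LinearMap.ker_eq_bot, LinearMap.ker_eq_bot']
  intro t ht
  refine DFinsupp.ext fun j => ?_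
  obtain ⟨c, hc0, hc⟩ := aux_orth hL (ρ j) (hirr j)
  have h1 : (auxAct (ρ j)) ∘ₗ auxTot ρ =
      c • (dualTensorHom k (V j) (V j) ∘ₗ
        (TensorProduct.comm k (V j) (Module.Dual k (V j))).toLinearMap ∘ₗ
        DirectSum.component k ι (fun i => V i ⊗[k] Module.Dual k (V i)) j) := by
    refine DirectSum.linearMap_ext k fun i => TensorProduct.ext' fun v α => ?_
    ext w
    simp only [LinearMap.comp_apply, auxTot, DirectSum.toModule_lof, LinearMap.smul_apply]
    by_cases hij : i = j
    · subst hij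
      simp [auxAct, DirectSum.component.lof_self, hc]
    · rw [DirectSum.component.of, dif_neg hij]
      simp only [auxAct, map_zero, LinearMap.zero_apply, smul_zero, LinearMap.coe_mk,
        AddHom.coe_mk, LinearMap.sum_apply, LinearMap.smul_apply, auxCoef_tmul]
      rw [← auxAvg_apply]
      rcases aux_schur_bij (ρ i) (ρ j) (hirr i) (hirr j) (auxAvg (ρ i) (ρ j) α w)
        (auxAvg_comm _ _ _ _) with h | h
      · rw [h]; rfl
      · exact absurd ⟨LinearEquiv.ofBijective _ h, auxAvg_comm _ _ _ _⟩ (hpair i j hij)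
  have h2 := LinearMap.congr_fun h1 t
  rw [LinearMap.comp_apply, ht, map_zero, LinearMap.smul_apply] at h2
  have h3 := (smul_eq_zero.1 h2.symm).resolve_left hc0
  simp only [LinearMap.comp_apply] at h3
  have h4 := (dualTensorHom_bijective (R := k) (M := V j) (N := V j)).1 (h3.trans (map_zero _).symm)
  exact (TensorProduct.comm k (V j) (Module.Dual k (V j))).injective (h4.trans (map_zero _).symm)

theorem auxTot_surjective {k L ι : Type} [Field k] [Group L] [Fintype L]
    (hL : (Fintype.card L : k) ≠ 0) [DecidableEq ι] {V : ι → Type}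
    [∀ i, AddCommGroup (V i)] [∀ i, Module k (V i)]
    (ρ : ∀ i, Representation k L (V i))
    (hcomplete : ∀ (U : Type) [AddCommGroup U] [Module k U] [FiniteDimensional k U]
      (ρU : Representation k L U), IsIrreducibleRep k L ρU →
        ∃ i, ∃ e : U ≃ₗ[k] V i, ∀ l u, e (ρU l u) = ρ i l (e u)) :
    Function.Surjective (auxTot ρ) := by
  have : NeZero (Nat.card L : k) := ⟨by rwa [Nat.card_eq_fintype_card]⟩
  have : Module.Finite k (MonoidAlgebra k L) := inferInstance
  let R : AddSubgroup (MonoidAlgebra k L) :=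
    { carrier := {a | ∃ t, auxTot ρ t = fun l => a.coeff l}
      zero_mem' := ⟨0, by ext; simp⟩
      add_mem' := by
        rintro a b ⟨t, ht⟩ ⟨s, hs⟩
        exact ⟨t + s, by ext; simp [ht, hs]⟩
      neg_mem' := by
        rintro a ⟨t, ht⟩
        exact ⟨-t, by ext; simp [ht]⟩ }
  have hR : ∀ S : Submodule (MonoidAlgebra k L) (MonoidAlgebra k L),
      IsSimpleModule (MonoidAlgebra k L) S → S.toAddSubgroup ≤ R := by
    intro S hS s hs
    let ρS : Representation k L S :=
      ((Algebra.lsmul k k S : MonoidAlgebra k L →ₐ[k] Module.End k S) :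
        MonoidAlgebra k L →* Module.End k S).comp (MonoidAlgebra.of k L)
    have hρS : ∀ l (x : S), ρS l x = MonoidAlgebra.of k L l • x := fun l x => rfl
    have : FiniteDimensional k S :=
      FiniteDimensional.of_injective (S.subtype.restrictScalars k) S.injective_subtype
    have hirr : IsIrreducibleRep k L ρS := by
      refine ⟨IsSimpleModule.nontrivial (MonoidAlgebra k L) S, fun q hq => ?_⟩
      rcases eq_bot_or_eq_top (MonoidAlgebra.submoduleOfSMulMem q hq) with h | h
      · left
        rw [eq_bot_iff]
        intro x hx
        have : x ∈ MonoidAlgebra.submoduleOfSMulMem q hq := hx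
        rw [h] at this
        exact this
      · right
        rw [eq_top_iff]
        intro x _
        have : x ∈ MonoidAlgebra.submoduleOfSMulMem q hq := h ▸ Submodule.mem_top
        exact this
    obtain ⟨i, e, he⟩ := hcomplete S ρS hirr
    let ev : Module.Dual k S :=
      { toFun := fun x => (x : MonoidAlgebra k L).coeff 1
        map_add' := by intros; simp
        map_smul' := by intros; simp }
    refine ⟨DirectSum.lof k ι _ i (e ⟨s, hs⟩ ⊗ₜ (ev ∘ₗ e.symm.toLinearMap)), ?_⟩
    ext l
    rw [auxTot, DirectSum.toModule_lof, auxCoef_tmul, ← he]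
    rw [LinearMap.comp_apply, LinearEquiv.coe_coe, LinearEquiv.symm_apply_apply, hρS]
    change (MonoidAlgebra.single l⁻¹ (1 : k) * s).coeff 1 = s.coeff l
    simp [MonoidAlgebra.coeff_single_mul_apply]
  intro f
  have htop : (MonoidAlgebra.ofCoeff (Finsupp.equivFunOnFinite.symm f)) ∈ R := by
    have h := IsSemisimpleModule.sSup_simples_eq_top (MonoidAlgebra k L) (MonoidAlgebra k L)
    have hm : (MonoidAlgebra.ofCoeff (Finsupp.equivFunOnFinite.symm f)) ∈
        sSup { m : Submodule (MonoidAlgebra k L) (MonoidAlgebra k L) |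
          IsSimpleModule (MonoidAlgebra k L) m } := by rw [h]; trivial
    rw [sSup_eq_iSup'] at hm
    refine Submodule.iSup_induction _ (motive := fun x => x ∈ R) hm ?_ R.zero_mem
      (fun _ _ => R.add_mem)
    rintro ⟨S, hS⟩ x hx
    exact hR S hS hx
  obtain ⟨t, ht⟩ := htop
  exact ⟨t, by rw [ht]; rfl⟩

end Aux

section Aux2

/-- The bilinear map inducing the isomorphism. -/
noncomputable def auxB {k L Q V : Type} [Field k] [Group L] [Fintype L] [Group Q] [Fintype Q]
    [AddCommGroup V] [Module k V] (ρ : Representation k L V) :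
    (Q →₀ V) ⊗[k] (Q →₀ Module.Dual k V) →ₗ[k] ((L × Q) →₀ k) :=
  TensorProduct.lift (LinearMap.mk₂ k
    (fun m n => Finsupp.equivFunOnFinite.symm
      (fun p : L × Q => ∑ z : Q, n (z⁻¹ * p.2) (ρ p.1⁻¹ (m z))))
    (by intros; ext; simp [Finset.sum_add_distrib])
    (by intros; ext; simp [Finset.mul_sum])
    (by intros; ext; simp [Finset.sum_add_distrib])
    (by intros; ext; simp [Finset.mul_sum]))

theorem auxB_tmul {k L Q V : Type} [Field k] [Group L] [Fintype L] [Group Q] [Fintype Q]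
    [AddCommGroup V] [Module k V] (ρ : Representation k L V)
    (m : Q →₀ V) (n : Q →₀ Module.Dual k V) (l : L) (q : Q) :
    auxB ρ (m ⊗ₜ n) (l, q) = ∑ z : Q, n (z⁻¹ * q) (ρ l⁻¹ (m z)) := rfl

open Classical in
theorem auxB_single {k L Q V : Type} [Field k] [Group L] [Fintype L] [Group Q] [Fintype Q]
    [AddCommGroup V] [Module k V] (ρ : Representation k L V)
    (z z' : Q) (v : V) (α : Module.Dual k V) (l : L) (q : Q) :
    auxB ρ (Finsupp.single z v ⊗ₜ Finsupp.single z' α) (l, q) =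
      if z * z' = q then α (ρ l⁻¹ v) else 0 := by
  rw [auxB_tmul, Finset.sum_eq_single z]
  · by_cases h : z * z' = q
    · subst h; simp
    · have h' : z' ≠ z⁻¹ * q := fun e => h (by rw [e]; simp)
      rw [if_neg h, Finsupp.single_eq_of_ne h'.symm]; simp
  · intro b _ hb
    rw [Finsupp.single_eq_of_ne hb]; simp
  · simp

theorem auxB_left {k L Q V : Type} [Field k] [Group L] [Fintype L] [Group Q] [Fintype Q]
    [AddCommGroup V] [Module k V] (ρ : Representation k L V)
    (ρH : Representation k (L × Q) (Q →₀ V))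
    (hρH : ∀ (l : L) (x : Q) (v : V) (z : Q),
      ρH (l, x) (Finsupp.single z v) = Finsupp.single (x * z) (ρ l v))
    (h : L × Q) (m : Q →₀ V) (n : Q →₀ Module.Dual k V) :
    auxB ρ (ρH h m ⊗ₜ n) = Finsupp.mapDomain (fun t => h * t) (auxB ρ (m ⊗ₜ n)) := by
  classical
  induction m using Finsupp.induction_linear with
  | zero => simp
  | add a b ha hb => simp [TensorProduct.add_tmul, ha, hb, Finsupp.mapDomain_add]
  | single z v =>
    induction n using Finsupp.induction_linear with
    | zero => simp
    | add a b ha hb => simp [TensorProduct.tmul_add, ha, hb, Finsupp.mapDomain_add]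
    | single z' α =>
      obtain ⟨g, x⟩ := h
      ext ⟨l, q⟩
      have e : ((l, q) : L × Q) = (g, x) * (g⁻¹ * l, x⁻¹ * q) := by simp
      conv_rhs => rw [e]
      rw [Finsupp.mapDomain_apply (mul_right_injective (g, x)), hρH, auxB_single, auxB_single]
      have e2 : (x * z * z' = q) ↔ (z * z' = x⁻¹ * q) := by
        rw [eq_inv_mul_iff_mul_eq, mul_assoc]
      simp [e2]

theorem auxB_right {k L Q V : Type} [Field k] [Group L] [Fintype L] [Group Q] [Fintype Q]
    [AddCommGroup V] [Module k V] (ρ : Representation k L V)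
    (σH : Representation k (L × Q)ᵐᵒᵖ (Q →₀ Module.Dual k V))
    (hσH : ∀ (l : L) (x : Q) (α : Module.Dual k V) (z : Q),
      σH (op (l, x)) (Finsupp.single z α) = Finsupp.single (z * x) (α ∘ₗ ρ l))
    (h : L × Q) (m : Q →₀ V) (n : Q →₀ Module.Dual k V) :
    auxB ρ (m ⊗ₜ σH (op h) n) = Finsupp.mapDomain (fun t => t * h) (auxB ρ (m ⊗ₜ n)) := by
  classical
  induction m using Finsupp.induction_linear with
  | zero => simp
  | add a b ha hb => simp [TensorProduct.add_tmul, ha, hb, Finsupp.mapDomain_add]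
  | single z v =>
    induction n using Finsupp.induction_linear with
    | zero => simp
    | add a b ha hb => simp [TensorProduct.tmul_add, ha, hb, Finsupp.mapDomain_add]
    | single z' α =>
      obtain ⟨g, x⟩ := h
      ext ⟨l, q⟩
      have e : ((l, q) : L × Q) = (l * g⁻¹, q * x⁻¹) * (g, x) := by simp
      conv_rhs => rw [e]
      rw [Finsupp.mapDomain_apply (mul_left_injective (g, x)), hσH, auxB_single, auxB_single]
      have e2 : (z * (z' * x) = q) ↔ (z * z' = q * x⁻¹) := by
        rw [eq_mul_inv_iff_mul_eq, mul_assoc]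
      simp [e2]

theorem auxB_bal {k L Q V : Type} [Field k] [Group L] [Fintype L] [Group Q] [Fintype Q]
    [AddCommGroup V] [Module k V] (ρ : Representation k L V)
    (rQ : Representation k Qᵐᵒᵖ (Q →₀ V))
    (hrQ : ∀ (y : Q) (v : V) (z : Q),
      rQ (op y) (Finsupp.single z v) = Finsupp.single (z * y) v)
    (lQ : Representation k Q (Q →₀ Module.Dual k V))
    (hlQ : ∀ (y : Q) (α : Module.Dual k V) (z : Q),
      lQ y (Finsupp.single z α) = Finsupp.single (y * z) α) :
    balancedRel k Q rQ lQ ≤ LinearMap.ker (auxB (L := L) ρ) := by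
  classical
  rw [balancedRel, Submodule.span_le]
  rintro _ ⟨y, m, n, rfl⟩
  rw [SetLike.mem_coe, LinearMap.mem_ker, map_add, map_smul, neg_one_smul, ← sub_eq_add_neg,
    sub_eq_zero]
  induction m using Finsupp.induction_linear with
  | zero => simp
  | add a b ha hb => simp [TensorProduct.add_tmul, ha, hb]
  | single z v =>
    induction n using Finsupp.induction_linear with
    | zero => simp
    | add a b ha hb => simp [TensorProduct.tmul_add, ha, hb]
    | single z' α =>
      ext ⟨l, q⟩
      rw [hrQ, hlQ, auxB_single, auxB_single, mul_assoc]

/-- The section `t ↦ t ⊗ z` of one summand. -/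
noncomputable def auxS {k Q V : Type} [Field k] [Group Q]
    [AddCommGroup V] [Module k V] (z : Q) :
    V ⊗[k] Module.Dual k V →ₗ[k] (Q →₀ V) ⊗[k] (Q →₀ Module.Dual k V) :=
  TensorProduct.map (Finsupp.lsingle z) (Finsupp.lsingle 1)

open Classical in
theorem auxB_auxS {k L Q V : Type} [Field k] [Group L] [Fintype L] [Group Q] [Fintype Q]
    [AddCommGroup V] [Module k V] (ρ : Representation k L V)
    (z : Q) (t : V ⊗[k] Module.Dual k V) (l : L) (q : Q) :
    auxB ρ (auxS z t) (l, q) = if z = q then auxCoef ρ t l else 0 := by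
  induction t using TensorProduct.induction_on with
  | zero => simp
  | add a b ha hb => simp only [map_add, Finsupp.add_apply, ha, hb, Pi.add_apply]; split_ifs <;> simp
  | tmul v α =>
    simp only [auxS, TensorProduct.map_tmul, Finsupp.lsingle_apply, auxB_single, auxCoef_tmul, mul_one]

theorem auxS_bal {k Q V : Type} [Field k] [Group Q]
    [AddCommGroup V] [Module k V]
    (rQ : Representation k Qᵐᵒᵖ (Q →₀ V))
    (hrQ : ∀ (y : Q) (v : V) (z : Q),
      rQ (op y) (Finsupp.single z v) = Finsupp.single (z * y) v)
    (lQ : Representation k Q (Q →₀ Module.Dual k V))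
    (hlQ : ∀ (y : Q) (α : Module.Dual k V) (z : Q),
      lQ y (Finsupp.single z α) = Finsupp.single (y * z) α)
    (x : (Q →₀ V) ⊗[k] (Q →₀ Module.Dual k V)) :
    ∃ u : Q →₀ V ⊗[k] Module.Dual k V,
      x - Finsupp.lsum k (fun z => auxS z) u ∈ balancedRel k Q rQ lQ := by
  suffices h : LinearMap.range (Finsupp.lsum k (fun z : Q => auxS (k := k) (V := V) z)) ⊔
      balancedRel k Q rQ lQ = ⊤ by
    obtain ⟨_, ⟨u, rfl⟩, r, hr, e⟩ := Submodule.mem_sup.1 (h ▸ Submodule.mem_top : x ∈ _)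
    exact ⟨u, by rw [← e]; simpa using hr⟩
  rw [eq_top_iff, ← TensorProduct.span_tmul_eq_top, Submodule.span_le]
  rintro _ ⟨m, n, rfl⟩
  rw [SetLike.mem_coe]
  induction m using Finsupp.induction_linear with
  | zero => simp
  | add a b ha hb => rw [TensorProduct.add_tmul]; exact add_mem ha hb
  | single z v =>
    induction n using Finsupp.induction_linear with
    | zero => simp
    | add a b ha hb => rw [TensorProduct.tmul_add]; exact add_mem ha hb
    | single z' α =>
      have e : Finsupp.single z v ⊗ₜ[k] Finsupp.single z' α =
          Finsupp.lsum k (fun z : Q => auxS (k := k) (V := V) z)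
            (Finsupp.single (z * z') (v ⊗ₜ α)) -
          (rQ (op z') (Finsupp.single z v) ⊗ₜ[k] Finsupp.single 1 α +
            (-1 : k) • (Finsupp.single z v ⊗ₜ[k] lQ z' (Finsupp.single 1 α))) := by
        have hneg : ∀ w : (Q →₀ V) ⊗[k] (Q →₀ Module.Dual k V), (-1 : k) • w = -w :=
          fun w => neg_one_smul k w
        rw [hrQ, hlQ, hneg]
        simp [auxS]
      rw [e]
      exact sub_mem (Submodule.mem_sup_left ⟨_, rfl⟩)
        (Submodule.mem_sup_right (Submodule.subset_span ⟨_, _, _, rfl⟩))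

end Aux2

section Aux3

variable {k L Q ι : Type} [Field k] [Group L] [Fintype L] [Group Q] [Fintype Q]
  [DecidableEq ι] {V : ι → Type}
  [∀ i, AddCommGroup (V i)] [∀ i, Module k (V i)] (ρ : ∀ i, Representation k L (V i))

/-- The map inducing the isomorphism. -/
noncomputable def auxPhi :
    (DirectSum ι (fun i => (Q →₀ V i) ⊗[k] (Q →₀ Module.Dual k (V i)))) →ₗ[k] ((L × Q) →₀ k) :=
  DirectSum.toModule k ι _ (fun i => auxB (ρ i))

theorem auxPhi_lof (i : ι) (x : (Q →₀ V i) ⊗[k] (Q →₀ Module.Dual k (V i))) :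
    auxPhi ρ (DirectSum.lof k ι (fun i => (Q →₀ V i) ⊗[k] (Q →₀ Module.Dual k (V i))) i x) =
      auxB (ρ i) x := by
  rw [auxPhi, DirectSum.toModule_lof]

/-- The section on the direct sum. -/
noncomputable def auxSec (k : Type) [Field k] (V : ι → Type)
    [∀ i, AddCommGroup (V i)] [∀ i, Module k (V i)] (z : Q) :
    (DirectSum ι (fun i => V i ⊗[k] Module.Dual k (V i))) →ₗ[k]
    (DirectSum ι (fun i => (Q →₀ V i) ⊗[k] (Q →₀ Module.Dual k (V i)))) :=
  DirectSum.toModule k ι _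
    (fun i => DirectSum.lof k ι (fun i => (Q →₀ V i) ⊗[k] (Q →₀ Module.Dual k (V i))) i ∘ₗ auxS z)

theorem auxSec_lof (z : Q) (i : ι) (t : V i ⊗[k] Module.Dual k (V i)) :
    auxSec k V z (DirectSum.lof k ι (fun i => V i ⊗[k] Module.Dual k (V i)) i t) =
      DirectSum.lof k ι (fun i => (Q →₀ V i) ⊗[k] (Q →₀ Module.Dual k (V i))) i (auxS z t) := by
  rw [auxSec, DirectSum.toModule_lof, LinearMap.comp_apply]

open Classical in
theorem auxPhi_sec (z : Q) (t : DirectSum ι (fun i => V i ⊗[k] Module.Dual k (V i)))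
    (l : L) (q : Q) :
    auxPhi ρ (auxSec k V z t) (l, q) = if z = q then auxTot ρ t l else 0 := by
  induction t using DirectSum.induction_on with
  | zero => simp
  | of i x =>
    rw [← DirectSum.lof_eq_of k, auxSec_lof, auxPhi_lof, auxB_auxS, auxTot,
      DirectSum.toModule_lof]
  | add a b ha hb =>
    simp only [map_add, Finsupp.add_apply, ha, hb, Pi.add_apply]; split_ifs <;> simp

/-- The full section. -/
noncomputable def auxTh (k : Type) [Field k] (V : ι → Type)
    [∀ i, AddCommGroup (V i)] [∀ i, Module k (V i)] :
    (Q →₀ DirectSum ι (fun i => V i ⊗[k] Module.Dual k (V i))) →ₗ[k]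
    (DirectSum ι (fun i => (Q →₀ V i) ⊗[k] (Q →₀ Module.Dual k (V i)))) :=
  Finsupp.lsum k (fun z => auxSec k V z)

theorem auxTh_single (z : Q) (t : DirectSum ι (fun i => V i ⊗[k] Module.Dual k (V i))) :
    auxTh k V (Finsupp.single z t) = auxSec k V z t := by
  rw [auxTh, Finsupp.lsum_single]

theorem auxPhi_th (u : Q →₀ DirectSum ι (fun i => V i ⊗[k] Module.Dual k (V i)))
    (l : L) (q : Q) : auxPhi ρ (auxTh k V u) (l, q) = auxTot ρ (u q) l := by
  classical
  induction u using Finsupp.induction_linear with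
  | zero => simp
  | add a b ha hb => simp only [map_add, Finsupp.add_apply, ha, hb, Pi.add_apply]
  | single z t =>
    rw [auxTh_single, auxPhi_sec]
    by_cases h : z = q
    · subst h; simp
    · rw [if_neg h, Finsupp.single_eq_of_ne (Ne.symm h)]; simp

theorem aux_span (rQ : ∀ i, Representation k Qᵐᵒᵖ (Q →₀ V i))
    (hrQ : ∀ i (y : Q) (v : V i) (z : Q),
      rQ i (op y) (Finsupp.single z v) = Finsupp.single (z * y) v)
    (lQ : ∀ i, Representation k Q (Q →₀ Module.Dual k (V i)))
    (hlQ : ∀ i (y : Q) (α : Module.Dual k (V i)) (z : Q),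
      lQ i y (Finsupp.single z α) = Finsupp.single (y * z) α)
    (x : DirectSum ι (fun i => (Q →₀ V i) ⊗[k] (Q →₀ Module.Dual k (V i)))) :
    x ∈ LinearMap.range (auxTh (Q := Q) k V) ⊔ ⨆ i, Submodule.map
          (DirectSum.lof k ι (fun i => (Q →₀ V i) ⊗[k] (Q →₀ Module.Dual k (V i))) i)
          (balancedRel k Q (rQ i) (lQ i)) := by
  induction x using DirectSum.induction_on with
  | zero => exact zero_mem _
  | add a b ha hb => exact add_mem ha hb
  | of i x =>
    rw [← DirectSum.lof_eq_of k]
    obtain ⟨u, hu⟩ := auxS_bal (rQ i) (hrQ i) (lQ i) (hlQ i) x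
    rw [← sub_add_cancel x (Finsupp.lsum k (fun z => auxS z) u), map_add]
    refine add_mem (Submodule.mem_sup_right
      (Submodule.mem_iSup_of_mem i (Submodule.mem_map_of_mem hu))) (Submodule.mem_sup_left ?_)
    clear hu
    induction u using Finsupp.induction_linear with
    | zero => simp
    | add a b ha hb => rw [map_add, map_add]; exact add_mem ha hb
    | single z t =>
      refine ⟨Finsupp.single z
        (DirectSum.lof k ι (fun i => V i ⊗[k] Module.Dual k (V i)) i t), ?_⟩
      rw [auxTh_single, auxSec_lof, Finsupp.lsum_single]

theorem aux_R_le (rQ : ∀ i, Representation k Qᵐᵒᵖ (Q →₀ V i))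
    (hrQ : ∀ i (y : Q) (v : V i) (z : Q),
      rQ i (op y) (Finsupp.single z v) = Finsupp.single (z * y) v)
    (lQ : ∀ i, Representation k Q (Q →₀ Module.Dual k (V i)))
    (hlQ : ∀ i (y : Q) (α : Module.Dual k (V i)) (z : Q),
      lQ i y (Finsupp.single z α) = Finsupp.single (y * z) α) :
    (⨆ i, Submodule.map
          (DirectSum.lof k ι (fun i => (Q →₀ V i) ⊗[k] (Q →₀ Module.Dual k (V i))) i)
          (balancedRel k Q (rQ i) (lQ i))) ≤ LinearMap.ker (auxPhi (Q := Q) ρ) := by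
  refine iSup_le fun i => ?_
  rintro _ ⟨x, hx, rfl⟩
  rw [LinearMap.mem_ker, auxPhi_lof]
  exact auxB_bal (ρ i) (rQ i) (hrQ i) (lQ i) (hlQ i) hx

end Aux3

/-- Let `H = L × Q` with `|L|` invertible in the algebraically closed field `k`.
For each irreducible `kL`-module `V`, let `V⃗ = V ⊗ kQ` (a `(kH,kQ)`-bimodule, realised as
`Q →₀ V`) and `V⃖ = V* ⊗ kQ` (a `(kQ,kH)`-bimodule, realised as `Q →₀ V*`), with the actions
`(l,x)·(v⊗z)·y = lv ⊗ xzy` and `y·(α⊗z)·(l,x) = αl ⊗ yzx`.  Then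
`⨁_{V ∈ Irr(kL)} V⃗ ⊗_{kQ} V⃖ ≅ kH` as `(kH,kH)`-bimodules.  The isomorphism is presented by
a surjective `k`-linear map `φ` on `⨁ i, V⃗ᵢ ⊗[k] V⃖ᵢ` with kernel exactly the sum of the
balancing submodules, intertwining both `H`-actions. -/
theorem stmt1 (k : Type) [Field k] [IsAlgClosed k]
    (L : Type) [Group L] [Fintype L] (hL : (Fintype.card L : k) ≠ 0)
    (Q : Type) [Group Q] [Fintype Q]
    (ι : Type) [DecidableEq ι] (V : ι → Type)
    [∀ i, AddCommGroup (V i)] [∀ i, Module k (V i)] [∀ i, FiniteDimensional k (V i)]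
    (ρ : ∀ i, Representation k L (V i))
    -- the `V i` are pairwise non-isomorphic irreducible `kL`-modules …
    (hirr : ∀ i, IsIrreducibleRep k L (ρ i))
    (hpair : ∀ i j, i ≠ j →
      ¬ ∃ e : V i ≃ₗ[k] V j, ∀ l v, e (ρ i l v) = ρ j l (e v))
    -- … forming a complete set of representatives of the irreducible `kL`-modules
    (hcomplete : ∀ (U : Type) [AddCommGroup U] [Module k U] [FiniteDimensional k U]
      (ρU : Representation k L U), IsIrreducibleRep k L ρU →
        ∃ i, ∃ e : U ≃ₗ[k] V i, ∀ l u, e (ρU l u) = ρ i l (e u))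
    -- the left `H`-action on `V⃗ᵢ = Vᵢ ⊗ kQ`
    (ρH : ∀ i, Representation k (L × Q) (Q →₀ V i))
    (hρH : ∀ i (l : L) (x : Q) (v : V i) (z : Q),
      ρH i (l, x) (Finsupp.single z v) = Finsupp.single (x * z) (ρ i l v))
    -- the right `Q`-action on `V⃗ᵢ`
    (rQ : ∀ i, Representation k Qᵐᵒᵖ (Q →₀ V i))
    (hrQ : ∀ i (y : Q) (v : V i) (z : Q),
      rQ i (op y) (Finsupp.single z v) = Finsupp.single (z * y) v)
    -- the left `Q`-action on `V⃖ᵢ = Vᵢ* ⊗ kQ`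
    (lQ : ∀ i, Representation k Q (Q →₀ Module.Dual k (V i)))
    (hlQ : ∀ i (y : Q) (α : Module.Dual k (V i)) (z : Q),
      lQ i y (Finsupp.single z α) = Finsupp.single (y * z) α)
    -- the right `H`-action on `V⃖ᵢ`
    (σH : ∀ i, Representation k (L × Q)ᵐᵒᵖ (Q →₀ Module.Dual k (V i)))
    (hσH : ∀ i (l : L) (x : Q) (α : Module.Dual k (V i)) (z : Q),
      σH i (op (l, x)) (Finsupp.single z α) = Finsupp.single (z * x) (α ∘ₗ ρ i l)) :
    ∃ φ : (DirectSum ι (fun i => (Q →₀ V i) ⊗[k] (Q →₀ Module.Dual k (V i)))) →ₗ[k] ((L × Q) →₀ k),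
      Function.Surjective φ ∧
      LinearMap.ker φ =
        ⨆ i, Submodule.map
          (DirectSum.lof k ι (fun i => (Q →₀ V i) ⊗[k] (Q →₀ Module.Dual k (V i))) i)
          (balancedRel k Q (rQ i) (lQ i)) ∧
      (∀ i (h : L × Q) (m : Q →₀ V i) (n : Q →₀ Module.Dual k (V i)),
        φ (DirectSum.lof k ι (fun i => (Q →₀ V i) ⊗[k] (Q →₀ Module.Dual k (V i))) i
            (ρH i h m ⊗ₜ n)) =
          Finsupp.mapDomain (fun t => h * t)
            (φ (DirectSum.lof k ι (fun i => (Q →₀ V i) ⊗[k] (Q →₀ Module.Dual k (V i))) i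
              (m ⊗ₜ n)))) ∧
      (∀ i (h : L × Q) (m : Q →₀ V i) (n : Q →₀ Module.Dual k (V i)),
        φ (DirectSum.lof k ι (fun i => (Q →₀ V i) ⊗[k] (Q →₀ Module.Dual k (V i))) i
            (m ⊗ₜ σH i (op h) n)) =
          Finsupp.mapDomain (fun t => t * h)
            (φ (DirectSum.lof k ι (fun i => (Q →₀ V i) ⊗[k] (Q →₀ Module.Dual k (V i))) i
              (m ⊗ₜ n)))) := by
  have hinj := auxTot_injective hL ρ hirr hpair
  have hsurj := auxTot_surjective hL ρ hcomplete
  have hR := aux_R_le ρ rQ hrQ lQ hlQ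
  refine ⟨auxPhi ρ, ?_, le_antisymm ?_ hR, ?_, ?_⟩
  · intro f
    choose t ht using fun q => hsurj (fun l => f (l, q))
    refine ⟨auxTh k V (Finsupp.equivFunOnFinite.symm t), ?_⟩
    ext ⟨l, q⟩
    rw [auxPhi_th]
    exact congrFun (ht q) l
  · intro x hx
    obtain ⟨_, ⟨u, rfl⟩, r, hr, rfl⟩ := Submodule.mem_sup.1 (aux_span rQ hrQ lQ hlQ x)
    have h0 : auxPhi ρ (auxTh k V u) = 0 := by
      have h1 := hR hr
      rw [LinearMap.mem_ker] at hx h1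
      rw [map_add, h1, add_zero] at hx
      exact hx
    have hu : u = 0 := by
      ext1 q
      apply hinj
      ext l
      rw [← auxPhi_th, h0]
      simp
    rw [hu, map_zero, zero_add]
    exact hr
  · intro i h m n
    rw [auxPhi_lof, auxPhi_lof]
    exact auxB_left (ρ i) (ρH i) (hρH i) h m n
  · intro i h m n
    rw [auxPhi_lof, auxPhi_lof]
    exact auxB_right (ρ i) (σH i) (hσH i) h m n
end

section
/- Let k be an algebraically closed field of characteristic p > 0 and G a finite group. The rank over k of the Cartan matrix of kG reduced modulo p equals the number of conjugacy classes of p-regular elements x of G such that C_G(x) is a p'-group (elements of defect zero). -/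
/-- An indecomposable module: nontrivial, and any direct sum decomposition is trivial. -/
def IsIndecomposableModule (R M : Type) [Ring R] [AddCommGroup M] [Module R M] : Prop :=
  Nontrivial M ∧ ∀ A B : Submodule R M, IsCompl A B → A = ⊥ ∨ B = ⊥


/-- Fitting style -/
theorem unit_or_nilp {A P : Type} [Ring A] [AddCommGroup P] [Module A P] [IsArtinian A P] [IsNoetherian A P]
  (hind : ∀ U V : Submodule A P, IsCompl U V → U = ⊥ ∨ V = ⊥) (x : Module.End A P) :
  IsUnit x ∨ IsNilpotent x := by
  obtain ⟨n, hn⟩ := Filter.eventually_atTop.1 x.eventually_isCompl_ker_pow_range_pow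
  have h := hn (n+1) (by omega)
  rcases hind _ _ h with h1 | h1
  · left
    rw [Module.End.isUnit_iff]
    have hi : Function.Injective x := by
      rw [← LinearMap.ker_eq_bot, eq_bot_iff, ← h1]
      intro v hv
      simp only [LinearMap.mem_ker] at hv ⊢
      rw [pow_succ, Module.End.mul_apply, hv, map_zero]
    exact IsArtinian.bijective_of_injective_endomorphism x hi
  · right
    exact ⟨n+1, LinearMap.range_eq_bot.1 h1⟩

theorem nonunit_kills {E H : Type} [Ring E] [AddCommGroup H] [Module E H]
  (h1 : ∀ x : E, IsUnit x ∨ IsNilpotent x) [IsSimpleModule E H] (n : E) (hn : ¬ IsUnit n) (s : H) : n • s = 0 := by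
  by_contra hs
  obtain ⟨y, hy⟩ := IsSimpleModule.toSpanSingleton_surjective E hs s
  simp only [LinearMap.toSpanSingleton_apply] at hy
  have hs0 : s ≠ 0 := by rintro rfl; simp at hs
  have hz : (1 - y * n) • s = 0 := by rw [sub_smul, one_smul, mul_smul, hy, sub_self]
  rcases h1 (y * n) with hu | hu
  · have hnn := (h1 n).resolve_left hn
    obtain ⟨m, hm⟩ := hnn
    have : ∀ j, n ^ j = 0 → (1 : E) = 0 := by
      intro j
      induction j with
      | zero => simp
      | succ j ih =>
        intro hj
        apply ih
        have : (y * n) * n ^ j = 0 := by rw [mul_assoc, ← pow_succ', hj, mul_zero]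
        exact (hu.mul_right_eq_zero).1 this
    have h10 := this m hm
    exact hs0 (by rw [← one_smul E s, h10, zero_smul])
  · have := hu.isUnit_one_sub
    exact hs0 ((this.smul_eq_zero).1 hz)

theorem length_lemma {E F : Type} [Ring E] [Field F] [Module F E] [IsScalarTower F E E]
  (h1 : ∀ x : E, IsUnit x ∨ IsNilpotent x) (h2 : ∀ x : E, ∃ a : F, ¬ IsUnit (x - a • (1:E)))
  {H : Type} [AddCommGroup H] [Module E H] (hH : IsFiniteLength E H) :
  ∀ [Module F H] [IsScalarTower F E H],
  Module.Finite F H ∧ (Module.finrank F H : ℕ∞) = Module.length E H := by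
  induction hH with
  | of_subsingleton =>
    intro _ _
    refine ⟨inferInstance, ?_⟩
    rw [Module.finrank_zero_of_subsingleton, Module.length_eq_zero]; rfl
  | @of_simple_quotient M _ _ N hN hf ih =>
    intro _ _
    obtain ⟨f1, f2⟩ := ih
    have key : Module.finrank F (M ⧸ N) = 1 := by
      have := IsSimpleModule.nontrivial E (M ⧸ N)
      obtain ⟨s, hs⟩ := exists_ne (0 : M ⧸ N)
      refine finrank_eq_one s hs fun w => ?_
      obtain ⟨x, hx⟩ := IsSimpleModule.toSpanSingleton_surjective E hs w
      simp only [LinearMap.toSpanSingleton_apply] at hx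
      obtain ⟨a, ha⟩ := h2 x
      refine ⟨a, ?_⟩
      have := nonunit_kills h1 _ ha s
      rw [sub_smul, smul_assoc, one_smul, sub_eq_zero] at this
      rw [← this, hx]
    have fq : Module.Finite F (M ⧸ N) := Module.finite_of_finrank_eq_succ key
    have : Module.Finite F (M ⧸ N.restrictScalars F) := fq
    have : Module.Finite F (N.restrictScalars F) := f1
    have fM : Module.Finite F M := Module.Finite.of_submodule_quotient (N.restrictScalars F)
    refine ⟨fM, ?_⟩
    have e := Submodule.finrank_quotient_add_finrank (N.restrictScalars F)
    have e' : Module.finrank F (M ⧸ N) + Module.finrank F N = Module.finrank F M := e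
    rw [← e', key, Module.length_eq_add_of_exact N.subtype N.mkQ N.subtype_injective N.mkQ_surjective (LinearMap.exact_subtype_mkQ N), ← f2, Module.length_eq_one E (M ⧸ N)]
    push_cast
    rw [add_comm]

/-- exotic scalars -/
theorem exotic {A K k : Type} [Field K] [IsAlgClosed K] [Field k] [IsAlgClosed k] [Ring A] [Algebra K A]
  {P T : Type} [AddCommGroup P] [Module A P] [Module K P] [IsScalarTower K A P]
  [Module.Finite K P] [Nontrivial P]
  (hind : ∀ U V : Submodule A P, IsCompl U V → U = ⊥ ∨ V = ⊥)
  [Module k P] [SMulCommClass A k P] [Module.Finite k P]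
  [AddCommGroup T] [Module A T] [Module K T] [IsScalarTower K A T] [Module.Finite K T] :
  Module.finrank k (T →ₗ[A] P) = Module.finrank K (T →ₗ[A] P) := by
  have : IsArtinian A P := isArtinian_of_tower K inferInstance
  have : IsNoetherian A P := isNoetherian_of_tower K inferInstance
  have h1 := unit_or_nilp hind
  have hK2 : ∀ x : Module.End A P, ∃ a : K, ¬ IsUnit (x - a • (1 : Module.End A P)) := by
    intro x
    let y : Module.End K P := x.restrictScalars K
    obtain ⟨a, ha⟩ := Module.End.exists_eigenvalue y
    refine ⟨a, fun hu => ?_⟩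
    obtain ⟨v, hv⟩ := ha.exists_hasEigenvector
    have h3 : (x - a • (1 : Module.End A P)) v = 0 := by
      have := hv.apply_eq_smul
      change x v - a • v = 0
      rw [sub_eq_zero]; exact this
    have hb := (Module.End.isUnit_iff _).1 hu
    exact hv.2 (hb.1 (by rw [h3, map_zero]))
  let E := Module.End A P
  have : IsScalarTower K E P := ⟨fun a x v => rfl⟩
  have : IsScalarTower k E P := ⟨fun a x v => rfl⟩
  have : IsScalarTower K E E := ⟨fun a x v => rfl⟩
  have : IsScalarTower k E E := ⟨fun a x v => rfl⟩
  have hcomm : ∀ (a : K) (x : E) (v : P), x (a • v) = a • x v := fun a x v => by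
    rw [← algebraMap_smul A a v, map_smul, algebraMap_smul]
  have hk2 : ∀ x : E, ∃ a : k, ¬ IsUnit (x - a • (1 : E)) := by
    have : IsArtinian E P := isArtinian_of_tower K inferInstance
    obtain ⟨S, hS⟩ := IsAtomic.exists_atom (Submodule E P)
    have hSs : IsSimpleModule E S := isSimpleModule_iff_isAtom.2 hS
    have := IsSimpleModule.nontrivial E S
    obtain ⟨s, hs⟩ := exists_ne (0 : S)
    have kill : ∀ x : E, ¬ IsUnit x → x (s : P) = 0 := fun x hx => by
      have := nonunit_kills h1 x hx s
      exact congrArg Subtype.val this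
    have hs0 : (s : P) ≠ 0 := fun h => hs (Subtype.ext h)
    have hex : ∀ a : k, ∃ b : K, a • (s : P) = b • (s : P) := fun a => by
      obtain ⟨b, hb⟩ := hK2 (a • (1 : E))
      refine ⟨b, ?_⟩
      have := kill _ hb
      exact sub_eq_zero.1 this
    choose σ hσ using hex
    have inj : ∀ b c : K, b • (s : P) = c • (s : P) → b = c := fun b c h => smul_left_injective K hs0 h
    have hcm : ∀ (a : k) (b : K) (v : P), a • b • v = b • a • v := fun a b v => hcomm b (a • (1 : E)) v
    let σ' : k →+* K :=
      { toFun := σ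
        map_one' := inj _ _ (by rw [← hσ]; simp)
        map_zero' := inj _ _ (by rw [← hσ]; simp)
        map_add' := fun a b => inj _ _ (by rw [← hσ, add_smul, add_smul, hσ, hσ])
        map_mul' := fun a b => inj _ _ (by rw [← hσ, mul_smul, hσ b, hcm, hσ a, smul_smul, mul_comm]) }
    let _ : Algebra k K := σ'.toAlgebra
    let L : K →ₗ[k] P :=
      { toFun := fun c => c • (s : P)
        map_add' := fun a b => add_smul _ _ _
        map_smul' := fun a c => by
          change (σ a * c) • (s : P) = a • c • (s : P)
          rw [hcm, hσ, smul_smul, mul_comm] }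
    have : Module.Finite k K := Module.Finite.of_injective L (fun a b h => inj a b h)
    have hbij := IsAlgClosed.algebraMap_bijective_of_isIntegral (k := k) (K := K)
    intro x
    obtain ⟨b, hb⟩ := hK2 x
    obtain ⟨a, ha⟩ := hbij.2 b
    refine ⟨a, fun hu => ?_⟩
    have e1 := kill _ hb
    have e2 : (x - a • (1 : E)) (s : P) = 0 := by
      have : σ a = b := ha
      change x s - a • (s : P) = 0
      rw [hσ, this]; exact e1
    exact hs0 (((Module.End.isUnit_iff _).1 hu).1 (by rw [e2, map_zero]))
  have : IsScalarTower K E (T →ₗ[A] P) := ⟨fun a x v => rfl⟩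
  have : IsScalarTower k E (T →ₗ[A] P) := ⟨fun a x v => rfl⟩
  have fH : Module.Finite K (T →ₗ[A] P) := by
    refine Module.Finite.of_injective (LinearMap.restrictScalarsₗ K A T P K) ?_
    exact LinearMap.restrictScalars_injective K
  have hfl : IsFiniteLength E (T →ₗ[A] P) := by
    rw [isFiniteLength_iff_isNoetherian_isArtinian]
    exact ⟨isNoetherian_of_tower K inferInstance, isArtinian_of_tower K inferInstance⟩
  have r1 := (length_lemma (F := K) h1 hK2 hfl).2
  have r2 := (length_lemma (F := k) h1 hk2 hfl).2
  exact_mod_cast r2.trans r1.symm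

theorem exotic' {A K k : Type} [Field K] [IsAlgClosed K] [Field k] [IsAlgClosed k] [Ring A] [Algebra K A]
  {P T Q T' : Type} [AddCommGroup P] [Module A P] [Nontrivial P]
  (hind : ∀ U V : Submodule A P, IsCompl U V → U = ⊥ ∨ V = ⊥)
  [Module k P] [SMulCommClass A k P] [Module.Finite k P]
  [AddCommGroup T] [Module A T]
  [AddCommGroup Q] [Module A Q] [Module K Q] [IsScalarTower K A Q] [Module.Finite K Q]
  [AddCommGroup T'] [Module A T'] [Module K T'] [IsScalarTower K A T'] [Module.Finite K T']
  (f : P ≃ₗ[A] Q) (g : T ≃ₗ[A] T') :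
  Module.finrank k (T →ₗ[A] P) = Module.finrank K (T' →ₗ[A] Q) := by
  let _ : Module K P := Module.compHom P (algebraMap K A)
  let _ : Module K T := Module.compHom T (algebraMap K A)
  have : IsScalarTower K A P := IsScalarTower.of_algebraMap_smul fun _ _ => rfl
  have : IsScalarTower K A T := IsScalarTower.of_algebraMap_smul fun _ _ => rfl
  have : Module.Finite K P := Module.Finite.equiv (f.restrictScalars K).symm
  have : Module.Finite K T := Module.Finite.equiv (g.restrictScalars K).symm
  rw [exotic (K := K) hind]
  refine LinearEquiv.finrank_eq
    { toFun := fun h => f.toLinearMap ∘ₗ h ∘ₗ g.symm.toLinearMap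
      invFun := fun h => f.symm.toLinearMap ∘ₗ h ∘ₗ g.toLinearMap
      map_add' := fun a b => by ext; simp
      map_smul' := fun a b => by
        ext v
        exact (f.restrictScalars K).map_smul a (b (g.symm v))
      left_inv := fun h => by ext; simp
      right_inv := fun h => by ext; simp }

/-- A nonzero projective module has a functional with non-nilpotent value. -/
theorem exists_nonnilp {A P : Type} [Ring A] [IsArtinianRing A] [AddCommGroup P] [Module A P] [Nontrivial P]
    (hproj : Module.Projective A P) : ∃ (φ : P →ₗ[A] A) (v : P), ¬ IsNilpotent (φ v) := by
  by_contra! hcon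
  obtain ⟨s, hs⟩ := hproj.out
  have hJ : ∀ (φ : P →ₗ[A] A) (v : P), φ v ∈ Ideal.jacobson (⊥ : Ideal A) := by
    intro φ v
    rw [Ideal.mem_jacobson_iff]
    intro y
    have h := hcon φ (y • v)
    rw [map_smul, smul_eq_mul] at h
    obtain ⟨z, hz⟩ := h.isUnit_add_one.exists_left_inv
    refine ⟨z, ?_⟩
    rw [Ideal.mem_bot, mul_assoc, sub_eq_zero, ← hz, mul_add, mul_one]
  have hpow : ∀ n : ℕ, ∀ (φ : P →ₗ[A] A) (v : P), φ v ∈ (Ideal.jacobson (⊥ : Ideal A)) ^ (n + 1) := by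
    intro n
    induction n with
    | zero => simpa only [zero_add, Submodule.pow_one] using hJ
    | succ n ih =>
      intro φ v
      have hv : φ v = (s v).sum fun x a => a * φ x := by
        conv_lhs => rw [← hs v, Finsupp.linearCombination_apply, map_finsuppSum]
        simp
      rw [hv, Submodule.pow_succ' _ n.succ_ne_zero]
      refine Submodule.sum_mem _ fun x _ => ?_
      exact Ideal.mul_mem_mul (hJ (Finsupp.lapply x ∘ₗ s) v) (ih φ x)
  obtain ⟨n, hn⟩ := IsArtinianRing.isNilpotent_jacobson_bot (R := A)
  have hz : ∀ (φ : P →ₗ[A] A) (v : P), φ v = 0 := fun φ v => by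
    have := Ideal.pow_le_pow_right (Nat.le_succ n) (hpow n φ v)
    rw [hn] at this
    exact this
  obtain ⟨v, hv⟩ := exists_ne (0 : P)
  apply hv
  rw [← hs v]
  have : s v = 0 := by
    ext x
    exact hz (Finsupp.lapply x ∘ₗ s) v
  rw [this, map_zero]

theorem exists_idem_equiv {A P : Type} [Ring A] [IsArtinianRing A] [AddCommGroup P] [Module A P] [Nontrivial P]
    (hproj : Module.Projective A P) (hind : ∀ U V : Submodule A P, IsCompl U V → U = ⊥ ∨ V = ⊥) :
    ∃ e : A, e * e = e ∧ Nonempty (P ≃ₗ[A] Submodule.span A {e}) := by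
  obtain ⟨φ, v, hφ⟩ := exists_nonnilp hproj
  let α : A →ₗ[A] P := LinearMap.toSpanSingleton A P v
  let h : Module.End A A := φ ∘ₗ α
  have hh : ∀ n : ℕ, (h ^ n) 1 = (φ v) ^ n := by
    intro n
    induction n with
    | zero => simp
    | succ n ih =>
      rw [pow_succ', Module.End.mul_apply, ih]
      simp [h, α, pow_succ]
  obtain ⟨n, hn⟩ := Filter.eventually_atTop.1
    (h.eventually_isCompl_ker_pow_range_pow.and h.eventually_iSup_ker_pow_eq)
  have hc := (hn n le_rfl).1
  have hk : LinearMap.ker (h ^ (n + 1)) = LinearMap.ker (h ^ n) :=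
    (hn (n + 1) (by omega)).2.symm.trans (hn n le_rfl).2
  let R := LinearMap.range (h ^ n)
  have hRne : R ≠ ⊥ := fun hR => by
    have h0 : h ^ n = 0 := LinearMap.range_eq_bot.1 hR
    exact hφ ⟨n, by rw [← hh, h0]; rfl⟩
  let β : P →ₗ[A] R := (h ^ n).rangeRestrict ∘ₗ φ
  let α' : R →ₗ[A] P := α ∘ₗ R.subtype
  let γ : R →ₗ[A] R := β ∘ₗ α'
  have hγ : ∀ r : R, (γ r : A) = (h ^ (n + 1)) (r : A) := fun r => by
    rw [pow_succ]; rfl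
  have hγi : Function.Injective γ := by
    rw [← LinearMap.ker_eq_bot, eq_bot_iff]
    intro r hr
    have h1 : (r : A) ∈ LinearMap.ker (h ^ n) := by
      rw [← hk, LinearMap.mem_ker, ← hγ, LinearMap.mem_ker.1 hr]; rfl
    have h2 := (disjoint_iff.1 hc.disjoint).le ⟨h1, r.2⟩
    exact Subtype.ext h2
  have hγb : Function.Bijective γ := IsArtinian.bijective_of_injective_endomorphism γ hγi
  have hcompl : IsCompl (LinearMap.range α') (LinearMap.ker β) := by
    constructor
    · rw [disjoint_iff, eq_bot_iff]
      rintro x ⟨⟨r, rfl⟩, hx⟩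
      have : r = 0 := hγi (by rw [map_zero]; exact hx)
      simp [this]
    · rw [codisjoint_iff, eq_top_iff]
      intro x _
      obtain ⟨r, hr⟩ := hγb.2 (β x)
      rw [Submodule.mem_sup]
      refine ⟨α' r, ⟨r, rfl⟩, x - α' r, ?_, by abel⟩
      rw [LinearMap.mem_ker, map_sub, sub_eq_zero]; exact hr.symm
  have hβs : Function.Surjective β := fun r => by
    obtain ⟨t, ht⟩ := hγb.2 r
    exact ⟨α' t, ht⟩
  have hβi : Function.Injective β := by
    rw [← LinearMap.ker_eq_bot]
    refine (hind _ _ hcompl).resolve_left fun h0 => hRne ?_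
    have h00 : α' = 0 := LinearMap.range_eq_bot.1 h0
    rw [eq_bot_iff]
    intro x hx
    have : (⟨x, hx⟩ : R) = 0 := hγi (by
      rw [map_zero]; change β (α' _) = 0; rw [h00]; simp)
    exact congrArg Subtype.val this
  let pr : A →ₗ[A] A := R.subtype ∘ₗ R.projectionOnto _ hc.symm
  have hpr : ∀ x ∈ R, pr x = x := fun x hx => by
    exact congrArg Subtype.val (Submodule.projectionOnto_apply_left hc.symm ⟨x, hx⟩)
  have hpr1 : ∀ x, pr x = x * pr 1 := fun x => by
    rw [← smul_eq_mul, ← map_smul, smul_eq_mul, mul_one]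
  have hmem : ∀ x, pr x ∈ R := fun x => Subtype.mem _
  have hR : R = Submodule.span A {pr 1} := by
    ext x
    rw [Submodule.mem_span_singleton]
    constructor
    · intro hx
      exact ⟨x, by rw [smul_eq_mul, ← hpr1, hpr x hx]⟩
    · rintro ⟨a, rfl⟩
      exact R.smul_mem _ (hmem 1)
  refine ⟨pr 1, by rw [← hpr1, hpr _ (hmem 1)], ?_⟩
  rw [← hR]
  exact ⟨LinearEquiv.ofBijective β ⟨hβi, hβs⟩⟩

/-- The form `(a, b) ↦ tr (x ↦ a x b)`. -/
noncomputable def trForm {k A : Type} [Field k] [Ring A] [Algebra k A] (a b : A) : k :=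
  LinearMap.trace k A (LinearMap.mulLeft k a ∘ₗ LinearMap.mulRight k b)

section
variable {k A : Type} [Field k] [Ring A] [Algebra k A] [Module.Finite k A]

theorem trForm_nilp (a b : A) (hb : IsNilpotent b) : trForm (k := k) a b = 0 := by
  have hc : Commute (LinearMap.mulLeft k a) (LinearMap.mulRight k b) := LinearMap.commute_mulLeft_right a b
  have h1 : IsNilpotent (LinearMap.mulRight k b) := (LinearMap.isNilpotent_mulRight_iff k b).2 hb
  exact (LinearMap.isNilpotent_trace_of_isNilpotent (hc.isNilpotent_mul_left h1)).eq_zero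

theorem trForm_hom (e f : A) (he : e * e = e) (hf : f * f = f) :
    (Module.finrank k (Submodule.span A {e} →ₗ[A] Submodule.span A {f}) : k) = trForm e f := by
  set p : A →ₗ[k] A := LinearMap.mulLeft k e ∘ₗ LinearMap.mulRight k f with hp
  have hpa : ∀ x, p x = e * (x * f) := fun x => rfl
  have hidem : IsIdempotentElem p := by
    ext x
    change p (p x) = p x
    simp only [hpa]
    rw [mul_assoc, mul_assoc x f f, hf, ← mul_assoc e e, he]
  have hmf : ∀ y ∈ Submodule.span A {f}, y * f = y := by
    intro y hy
    obtain ⟨a, rfl⟩ := Submodule.mem_span_singleton.1 hy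
    rw [smul_eq_mul, mul_assoc, hf]
  have hme : ∀ y ∈ Submodule.span A {e}, y * e = y := by
    intro y hy
    obtain ⟨a, rfl⟩ := Submodule.mem_span_singleton.1 hy
    rw [smul_eq_mul, mul_assoc, he]
  have hmee : e ∈ Submodule.span A {e} := Submodule.mem_span_singleton_self e
  have hry : ∀ y : LinearMap.range p, p y = y := by
    rintro ⟨y, ⟨x, rfl⟩⟩
    exact LinearMap.congr_fun hidem x
  have htr : trForm (k := k) e f = Module.finrank k (LinearMap.range p) := by
    exact (LinearMap.IsIdempotentElem.isProj_range p hidem).trace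
  rw [htr]
  congr 1
  refine LinearEquiv.finrank_eq
    { toFun := fun φ => ⟨(φ ⟨e, hmee⟩ : A), ⟨(φ ⟨e, hmee⟩ : A), by
          rw [hpa, hmf _ (φ _).2, ← smul_eq_mul, ← Submodule.coe_smul, ← map_smul]
          congr 2
          exact Subtype.ext he⟩⟩
      invFun := fun y =>
        { toFun := fun x => ⟨(x : A) * (y : A), by
            have := hry y
            rw [hpa] at this
            rw [← this, ← mul_assoc, ← mul_assoc]
            exact Submodule.mem_span_singleton.2 ⟨_, rfl⟩⟩
          map_add' := fun a b => Subtype.ext (add_mul _ _ _)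
          map_smul' := fun a b => Subtype.ext (mul_assoc _ _ _) }
      map_add' := fun a b => rfl
      map_smul' := fun a b => rfl
      left_inv := fun φ => by
        ext ⟨x, hx⟩
        change x * (φ ⟨e, hmee⟩ : A) = φ ⟨x, hx⟩
        rw [← smul_eq_mul, ← Submodule.coe_smul, ← map_smul]
        congr 2
        exact Subtype.ext (hme x hx)
      right_inv := fun y => by
        apply Subtype.ext
        change e * (y : A) = y
        rw [← hry y, hpa, ← mul_assoc, he] }

/-- character -/
noncomputable def chi (k : Type) {A : Type} [Field k] [Ring A] [Algebra k A] (M : Type) [AddCommGroup M]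
    [Module A M] [Module k M] [IsScalarTower k A M] (c : A) : k :=
  LinearMap.trace k M (Algebra.lsmul k k M c)

theorem trForm_chi (c e : A) (he : e * e = e) :
    trForm (k := k) c e = chi k (Submodule.span A {e}) c := by
  let p : A →ₗ[k] Submodule.span A {e} :=
    { toFun := fun x => ⟨x * e, Submodule.mem_span_singleton.2 ⟨_, rfl⟩⟩
      map_add' := fun a b => Subtype.ext (add_mul _ _ _)
      map_smul' := fun a b => Subtype.ext (Algebra.smul_mul_assoc _ _ _) }
  let j : Submodule.span A {e} →ₗ[k] A := (Submodule.span A {e}).subtype.restrictScalars k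
  have h1 : LinearMap.mulLeft k c ∘ₗ LinearMap.mulRight k e = j ∘ₗ (Algebra.lsmul k k (Submodule.span A {e}) c ∘ₗ p) := by
    ext x; rfl
  have : Module.Finite k (Submodule.span A {e}) := Module.Finite.of_injective j Subtype.val_injective
  rw [trForm, h1, LinearMap.trace_comp_comm', chi]
  congr 1
  ext ⟨x, hx⟩
  obtain ⟨a, rfl⟩ := Submodule.mem_span_singleton.1 hx
  change c * (a * e * e) = c * (a * e)
  rw [mul_assoc, he]

theorem chi_equiv {M N : Type} [AddCommGroup M] [Module A M] [Module k M] [IsScalarTower k A M]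
    [AddCommGroup N] [Module A N] [Module k N] [IsScalarTower k A N] (f : M ≃ₗ[A] N) (c : A) :
    chi k M c = chi k N c := by
  rw [chi, chi, ← LinearMap.trace_conj' _ (f.restrictScalars k)]
  congr 1
  ext x
  simp [LinearEquiv.conj_apply]

theorem chi_zero {ι : Type} (e : ι → A)
    (hcomplete : ∀ (M : Type) [AddCommGroup M] [Module A M],
      Module.Finite A M → Module.Projective A M → Nontrivial M →
      (∀ U V : Submodule A M, IsCompl U V → U = ⊥ ∨ V = ⊥) →
      ∃ i, Nonempty (M ≃ₗ[A] Submodule.span A {e i}))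
    (c : A) (hc : ∀ i, chi k (Submodule.span A {e i}) c = 0) (n : ℕ) :
    ∀ (M : Type) [AddCommGroup M] [Module A M] [Module k M] [IsScalarTower k A M] [Module.Finite k M],
      Module.Projective A M → Module.finrank k M = n → chi k M c = 0 := by
  induction n using Nat.strong_induction_on with
  | _ n ih =>
    intro M _ _ _ _ _ hM hn
    rcases subsingleton_or_nontrivial M with hs | hs
    · have : (Algebra.lsmul k k M c : M →ₗ[k] M) = 0 := Subsingleton.elim _ _
      rw [chi, this, map_zero]
    by_cases hi : ∀ U V : Submodule A M, IsCompl U V → U = ⊥ ∨ V = ⊥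
    · obtain ⟨i, ⟨f⟩⟩ := hcomplete M (Module.Finite.of_restrictScalars_finite k A M) hM hs hi
      rw [chi_equiv f, hc]
    · push Not at hi
      obtain ⟨U, V, hUV, hU, hV⟩ := hi
      let f := Submodule.prodEquivOfIsCompl U V hUV
      have : Module.Finite k U := Module.Finite.of_injective (U.subtype.restrictScalars k) Subtype.val_injective
      have : Module.Finite k V := Module.Finite.of_injective (V.subtype.restrictScalars k) Subtype.val_injective
      have hpU : Module.Projective A U := Module.Projective.of_split U.subtype (U.projectionOnto V hUV) (by
        ext x; simp)
      have hpV : Module.Projective A V := Module.Projective.of_split V.subtype (V.projectionOnto U hUV.symm) (by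
        ext x; simp)
      have hd : Module.finrank k U + Module.finrank k V = Module.finrank k M := by
        rw [← Module.finrank_prod]; exact (f.restrictScalars k).finrank_eq
      have := Submodule.nontrivial_iff_ne_bot.2 hU
      have := Submodule.nontrivial_iff_ne_bot.2 hV
      have pU : 0 < Module.finrank k U := Module.finrank_pos
      have pV : 0 < Module.finrank k V := Module.finrank_pos
      rw [← chi_equiv f]
      have h1 : chi k (U × V) c = chi k U c + chi k V c := by
        rw [chi, chi, chi, ← LinearMap.trace_prodMap']; rfl
      rw [h1, ih _ (by omega) U hpU rfl, ih _ (by omega) V hpV rfl, add_zero]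

end

section
variable {k A : Type} [Field k] [Ring A] [Algebra k A]

theorem trForm_add_left (a a' b : A) : trForm (k := k) (a + a') b = trForm a b + trForm a' b := by
  rw [trForm, trForm, trForm, ← map_add]; congr 1; ext x; simp [add_mul]
theorem trForm_add_right (a b b' : A) : trForm (k := k) a (b + b') = trForm a b + trForm a b' := by
  rw [trForm, trForm, trForm, ← map_add]; congr 1; ext x; simp [mul_add]
theorem trForm_smul_left (r : k) (a b : A) : trForm (k := k) (r • a) b = r * trForm a b := by
  rw [trForm, trForm, ← smul_eq_mul, ← map_smul]; congr 1; ext x; simp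
theorem trForm_smul_right (r : k) (a b : A) : trForm (k := k) a (r • b) = r * trForm a b := by
  rw [trForm, trForm, ← smul_eq_mul, ← map_smul]; congr 1; ext x; simp

/-- bilinear version -/
noncomputable def trBil (k A : Type) [Field k] [Ring A] [Algebra k A] : A →ₗ[k] A →ₗ[k] k :=
  LinearMap.mk₂ k (fun a b => trForm a b) trForm_add_left trForm_smul_left trForm_add_right trForm_smul_right

theorem lagrange_zero (l : A →ₗ[k] k) (hid : ∀ e : A, e * e = e → l e = 0) (x : A) (s : Finset k)
    (hx : Polynomial.aeval x (∏ r ∈ s, (Polynomial.X - Polynomial.C r)) = 0) : l x = 0 := by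
  classical
  have hv : ∀ f : Polynomial k, (∀ r ∈ s, f.eval r = 0) → Polynomial.aeval x f = 0 := by
    intro f hf
    have : (∏ r ∈ s, (Polynomial.X - Polynomial.C r)) ∣ f := by
      refine Finset.prod_dvd_of_coprime ?_ fun r hr => Polynomial.dvd_iff_isRoot.2 (hf r hr)
      intro a _ b _ hab
      exact Polynomial.pairwise_coprime_X_sub_C Function.injective_id hab
    obtain ⟨q, rfl⟩ := this
    rw [map_mul, hx, zero_mul]
  have hinj : Set.InjOn (id : k → k) s := Function.injective_id.injOn
  have e1 : ∀ r ∈ s, l (Polynomial.aeval x (Lagrange.basis s id r)) = 0 := by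
    intro r hr
    apply hid
    rw [← map_mul, ← sub_eq_zero, ← map_sub]
    apply hv
    intro t ht
    by_cases h : r = t
    · subst h
      have := Lagrange.eval_basis_self hinj hr
      simp only [id] at this
      simp [this]
    · have := Lagrange.eval_basis_of_ne (v := (id : k → k)) h ht
      simp only [id] at this
      simp [this]
  have e2 : Polynomial.aeval x (Polynomial.X - Lagrange.interpolate s id id) = 0 := by
    apply hv
    intro r hr
    have := Lagrange.eval_interpolate_at_node (r := id) hinj hr
    simp only [id] at this
    rw [Polynomial.eval_sub, Polynomial.eval_X, this, sub_self]
  rw [map_sub, Polynomial.aeval_X, sub_eq_zero] at e2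
  rw [e2, Lagrange.interpolate_apply, map_sum, map_sum]
  refine Finset.sum_eq_zero fun r hr => ?_
  rw [map_mul, Polynomial.aeval_C, ← Algebra.smul_def, map_smul, e1 r hr, smul_zero]

end

section
variable {k A : Type} [Field k] [Ring A] [Algebra k A] [Module.Finite k A]

theorem gram_rank {ι : Type} [Fintype ι] [DecidableEq ι] (β : A →ₗ[k] A →ₗ[k] k)
    (hsymm : ∀ a b, β a b = β b a) (e : ι → A) (hK : ∀ c, (∀ i, β c (e i) = 0) → β c = 0) :
    (Matrix.of fun T S => β (e T) (e S)).rank = Module.finrank k (LinearMap.range β) := by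
  let F : A →ₗ[k] (ι → k) := LinearMap.pi fun i => β.flip (e i)
  let E : (ι → k) →ₗ[k] A := Fintype.linearCombination k e
  have hF : ∀ c i, F c i = β c (e i) := fun c i => rfl
  have hE : ∀ v, E v = ∑ i, v i • e i := fun v => Fintype.linearCombination_apply k e v
  have hM : (Matrix.of fun T S => β (e T) (e S)).mulVecLin = F ∘ₗ E := by
    apply LinearMap.ext
    intro v
    ext T
    rw [LinearMap.comp_apply, hF, hE, map_sum]
    simp only [Matrix.mulVecLin_apply, Matrix.mulVec, dotProduct, Matrix.of_apply, map_smul,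
      LinearMap.sum_apply, LinearMap.smul_apply, smul_eq_mul]
    exact Finset.sum_congr rfl fun S _ => by rw [mul_comm, hsymm]
  have hr : LinearMap.range (F ∘ₗ E) = LinearMap.range F := by
    apply le_antisymm (LinearMap.range_comp_le_range _ _)
    intro y hy
    by_contra hn
    obtain ⟨ψ, hψ1, hψ2⟩ := Submodule.exists_le_ker_of_notMem hn
    apply hψ1
    obtain ⟨c, rfl⟩ := hy
    set w : ι → k := fun i => ψ (Pi.single i 1) with hw
    have hψ : ∀ c, ψ (F c) = β (E w) c := by
      intro c
      rw [hsymm, hE, map_sum, LinearMap.pi_apply_eq_sum_univ ψ]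
      refine Finset.sum_congr rfl fun i _ => ?_
      rw [map_smul, smul_eq_mul, smul_eq_mul, hF, mul_comm]
      congr 2
      ext j
      simp [Pi.single_apply, eq_comm]
    have h0 : β (E w) = 0 := by
      apply hK
      intro i
      rw [← hψ]
      have : e i = E (Pi.single i 1) := by
        simp [E]
      rw [this]
      exact hψ2 ⟨Pi.single i 1, rfl⟩
    rw [hψ, h0]; rfl
  have hk : LinearMap.ker F = LinearMap.ker β := by
    ext c
    constructor
    · intro h
      exact hK c fun i => congrFun h i
    · intro h
      ext i
      rw [hF, LinearMap.mem_ker.1 h]; rfl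
  rw [Matrix.rank, hM, hr]
  have a1 := F.finrank_range_add_finrank_ker
  have a2 := β.finrank_range_add_finrank_ker
  rw [hk] at a1
  omega

end

section
variable {k G : Type} [Field k] [Group G] [Fintype G]

theorem trForm_single (g h : G) :
    trForm (k := k) (MonoidAlgebra.single g (1:k)) (MonoidAlgebra.single h (1:k)) =
      (Nat.card {x : G // g * x * h = x} : k) := by
  classical
  let b : Module.Basis G k (MonoidAlgebra k G) := MonoidAlgebra.basis G k
  rw [trForm, LinearMap.trace_eq_matrix_trace k b, Matrix.trace]
  have : ∀ x : G, (LinearMap.toMatrix b b (LinearMap.mulLeft k (MonoidAlgebra.single g (1:k)) ∘ₗ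
      LinearMap.mulRight k (MonoidAlgebra.single h (1:k)))).diag x = if g * x * h = x then 1 else 0 := by
    intro x
    rw [Matrix.diag_apply, LinearMap.toMatrix_apply]
    have hm : (LinearMap.mulLeft k (MonoidAlgebra.single g (1:k)) ∘ₗ
      LinearMap.mulRight k (MonoidAlgebra.single h (1:k))) (b x) = b (g * x * h) := by
      simp [b, MonoidAlgebra.single_mul_single, mul_assoc]
    rw [hm, Module.Basis.repr_self, Finsupp.single_apply]
  rw [Finset.sum_congr rfl fun x _ => this x, Finset.sum_boole, Nat.card_eq_fintype_card,
    Fintype.card_subtype]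

theorem card_sol {G : Type} [Group G] (g h x₀ : G) (hx : g * x₀ * h = x₀) :
    Nat.card {x : G // g * x * h = x} = Nat.card (Subgroup.centralizer {g}) := by
  have hh : h = x₀⁻¹ * g⁻¹ * x₀ := by
    have h2 := congrArg (fun t => x₀⁻¹ * g⁻¹ * t) hx
    simpa [mul_assoc] using h2
  have aux1 : ∀ x : G, g * x * h = x → x * x₀⁻¹ ∈ Subgroup.centralizer {g} := fun x hx => by
    rw [Subgroup.mem_centralizer_singleton_iff]
    rw [hh] at hx
    nth_rewrite 1 [← hx]
    group
  have aux2 : ∀ c : G, c ∈ Subgroup.centralizer {g} → g * (c * x₀) * h = c * x₀ := fun c hc => by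
    have h3 : c * g = g * c := Subgroup.mem_centralizer_singleton_iff.1 hc
    rw [hh, ← mul_assoc g c, ← h3]
    group
  refine Nat.card_congr
    { toFun := fun x => ⟨x.1 * x₀⁻¹, aux1 x.1 x.2⟩
      invFun := fun c => ⟨c.1 * x₀, aux2 c.1 c.2⟩
      left_inv := fun x => by simp
      right_inv := fun x => by simp }

theorem trForm_single_symm (g h : G) :
    trForm (k := k) (MonoidAlgebra.single g (1:k)) (MonoidAlgebra.single h (1:k)) =
    trForm (k := k) (MonoidAlgebra.single h (1:k)) (MonoidAlgebra.single g (1:k)) := by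
  rw [trForm_single, trForm_single]
  congr 1
  have aux : ∀ g h x : G, g * x * h = x → h * x⁻¹ * g = x⁻¹ := fun g h x hx => by
    have : h = x⁻¹ * g⁻¹ * x := by
      have h2 := congrArg (fun t => x⁻¹ * g⁻¹ * t) hx
      simpa [mul_assoc] using h2
    rw [this]; group
  exact Nat.card_congr
    { toFun := fun x => ⟨x.1⁻¹, aux _ _ _ x.2⟩
      invFun := fun x => ⟨x.1⁻¹, aux _ _ _ x.2⟩
      left_inv := fun x => by simp
      right_inv := fun x => by simp }

theorem trBil_symm (a b : MonoidAlgebra k G) : trBil k (MonoidAlgebra k G) a b = trBil k _ b a := by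
  have : trBil k (MonoidAlgebra k G) = (trBil k (MonoidAlgebra k G)).flip := by
    refine (MonoidAlgebra.basis G k).ext fun g => (MonoidAlgebra.basis G k).ext fun h => ?_
    simpa [trBil] using trForm_single_symm g h
  exact LinearMap.congr_fun₂ this a b

theorem trBil_rank (p : ℕ) (hp : p.Prime) [CharP k p] :
    Module.finrank k (LinearMap.range (trBil k (MonoidAlgebra k G))) =
      Nat.card {C : ConjClasses G // ∃ x : G, ConjClasses.mk x = C ∧
        (orderOf x).Coprime p ∧ ¬ p ∣ Nat.card ↥(Subgroup.centralizer {x})} := by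
  classical
  set I := {C : ConjClasses G // ∃ x : G, ConjClasses.mk x = C ∧
        (orderOf x).Coprime p ∧ ¬ p ∣ Nat.card ↥(Subgroup.centralizer {x})} with hI
  have : Fintype I := Fintype.ofFinite I
  choose x hx using fun C : I => C.2
  let v : I → (MonoidAlgebra k G →ₗ[k] k) := fun C => trBil k _ (MonoidAlgebra.single (x C) 1)
  have hB : ∀ g h : G, trBil k (MonoidAlgebra k G) (MonoidAlgebra.single g 1) (MonoidAlgebra.single h 1) =
    (Nat.card {x : G // g * x * h = x} : k) := fun g h => trForm_single g h
  have hli : LinearIndependent k v := by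
    rw [Fintype.linearIndependent_iff]
    intro c hc C
    have := LinearMap.congr_fun hc (MonoidAlgebra.single (x C)⁻¹ 1)
    rw [LinearMap.sum_apply, Finset.sum_eq_single C] at this
    · simp only [v, LinearMap.smul_apply, hB, LinearMap.zero_apply, smul_eq_mul] at this
      rw [card_sol (x C) (x C)⁻¹ 1 (by simp)] at this
      refine (mul_eq_zero.1 this).resolve_right fun h => ?_
      exact (hx C).2.2 ((CharP.cast_eq_zero_iff k p _).1 h)
    · intro D _ hD
      simp only [v, LinearMap.smul_apply, hB]
      have : IsEmpty {y : G // x D * y * (x C)⁻¹ = y} := ⟨fun ⟨y, hy⟩ => hD (Subtype.ext (by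
        rw [← (hx C).1, ← (hx D).1, ConjClasses.mk_eq_mk_iff_isConj, isConj_iff]
        refine ⟨y⁻¹, ?_⟩
        have h2 := congrArg (fun t => y⁻¹ * t * x C) hy
        simpa [mul_assoc] using h2))⟩
      simp
    · simp
  rw [Nat.card_eq_fintype_card, ← finrank_span_eq_card hli]
  suffices h : LinearMap.range (trBil k (MonoidAlgebra k G)) = Submodule.span k (Set.range v) by rw [h]
  apply le_antisymm
  · rw [LinearMap.range_eq_map, ← (MonoidAlgebra.basis G k).span_eq, Submodule.map_span, Submodule.span_le]
    rintro _ ⟨_, ⟨g, rfl⟩, rfl⟩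
    rw [MonoidAlgebra.basis_apply]
    by_cases hg : p ∣ Nat.card (Subgroup.centralizer {g})
    · have : trBil k (MonoidAlgebra k G) (MonoidAlgebra.single g 1) = 0 := by
        refine (MonoidAlgebra.basis G k).ext fun h => ?_
        rw [MonoidAlgebra.basis_apply, hB]
        by_cases hex : ∃ x₀, g * x₀ * h = x₀
        · obtain ⟨x₀, h0⟩ := hex
          rw [card_sol g h x₀ h0, (CharP.cast_eq_zero_iff k p _).2 hg]; rfl
        · have : IsEmpty {y : G // g * y * h = y} := ⟨fun ⟨y, hy⟩ => hex ⟨y, hy⟩⟩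
          simp
      rw [this]
      exact Submodule.zero_mem _
    · have hcop : (orderOf g).Coprime p := by
        have hd : orderOf g ∣ Nat.card (Subgroup.centralizer {g}) :=
          Subgroup.orderOf_dvd_natCard _ (Subgroup.mem_centralizer_singleton_iff.2 rfl)
        exact (((Nat.Prime.coprime_iff_not_dvd hp).2 hg).symm).coprime_dvd_left hd
      let C : I := ⟨ConjClasses.mk g, g, rfl, hcop, hg⟩
      have hc := (hx C).1
      rw [ConjClasses.mk_eq_mk_iff_isConj, isConj_iff] at hc
      obtain ⟨y, hy⟩ := hc
      have : trBil k (MonoidAlgebra k G) (MonoidAlgebra.single g 1) = v C := by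
        refine (MonoidAlgebra.basis G k).ext fun h => ?_
        rw [MonoidAlgebra.basis_apply]
        simp only [v]
        rw [hB, hB]
        congr 1
        refine Nat.card_congr ((Equiv.mulLeft y⁻¹).subtypeEquiv fun z => ?_)
        rw [← hy]
        simp only [Equiv.coe_mulLeft, mul_assoc]
        rw [← mul_right_inj y⁻¹, inv_mul_cancel_left]
      rw [this]
      exact Submodule.subset_span ⟨C, rfl⟩
  · rw [Submodule.span_le]
    rintro _ ⟨C, rfl⟩
    exact ⟨_, rfl⟩

end

theorem trace_zero {k G : Type} [Field k] [IsAlgClosed k] [Group G] [Fintype G] (p : ℕ) (hp : p.Prime) [CharP k p]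
    (l : MonoidAlgebra k G →ₗ[k] k) (hid : ∀ e : MonoidAlgebra k G, e * e = e → l e = 0)
    (hnil : ∀ e : MonoidAlgebra k G, IsNilpotent e → l e = 0) : l = 0 := by
  have := Fact.mk hp
  have : CharP (MonoidAlgebra k G) p := charP_of_injective_algebraMap (algebraMap k _).injective p
  refine (MonoidAlgebra.basis G k).ext fun g => ?_
  rw [MonoidAlgebra.basis_apply]
  obtain ⟨s, m, hm, hs⟩ := Nat.exists_eq_pow_mul_and_not_dvd (Nat.card_pos (α := G)).ne' p hp.ne_one
  have hcop : p.Coprime m := (Nat.Prime.coprime_iff_not_dvd hp).2 hm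
  have hm0 : 0 < m := Nat.pos_of_ne_zero (by rintro rfl; simp at hm)
  -- n with p^n ≡ 1 mod m, s ≤ n
  set n := m.totient * s with hn
  have hns : s ≤ n := Nat.le_mul_of_pos_left _ (Nat.totient_pos.2 hm0)
  have hmod : m ∣ p ^ n - 1 := by
    have h1 : p ^ n ≡ 1 [MOD m] := by
      rw [hn, pow_mul]
      simpa using (Nat.ModEq.pow_totient hcop).pow s
    exact (Nat.modEq_iff_dvd' (Nat.one_le_pow _ _ hp.pos)).1 h1.symm
  set x := g ^ p ^ n with hx
  have hxm : x ^ m = 1 := by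
    rw [hx, ← pow_mul]
    obtain ⟨t, ht⟩ := pow_dvd_pow p hns
    rw [ht, show p ^ s * t * m = Nat.card G * t by rw [hs]; ring, pow_mul, pow_card_eq_one', one_pow]
  have hxp : x ^ p ^ n = x := by
    have : p ^ n = (p ^ n - 1) + 1 := (Nat.sub_add_cancel (Nat.one_le_pow _ _ hp.pos)).symm
    obtain ⟨t, ht⟩ := hmod
    rw [this, ht, pow_succ, pow_mul, hxm, one_pow, one_mul]
  have hsp : ∀ (y : G) (j : ℕ), (MonoidAlgebra.single y (1:k)) ^ j = MonoidAlgebra.single (y ^ j) (1:k) := by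
    intro y j
    rw [MonoidAlgebra.single_pow, one_pow]
  have hnilp : IsNilpotent (MonoidAlgebra.single g (1:k) - MonoidAlgebra.single x (1:k)) := by
    refine ⟨p ^ n, ?_⟩
    have hc : Commute (MonoidAlgebra.single g (1:k)) (MonoidAlgebra.single x (1:k)) := by
      rw [hx, ← hsp]; exact Commute.self_pow _ _
    rw [sub_pow_char_pow_of_commute _ _ hc, hsp, hsp, hxp, ← hx, sub_self]
  have h1 := hnil _ hnilp
  rw [map_sub, sub_eq_zero] at h1
  rw [h1]
  have : NeZero (m : k) := ⟨fun h => hm ((CharP.cast_eq_zero_iff k p m).1 h)⟩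
  have : NeZero m := ⟨hm0.ne'⟩
  obtain ⟨ζ, hζ⟩ := HasEnoughRootsOfUnity.exists_primitiveRoot k m
  refine lagrange_zero l hid _ (Polynomial.nthRootsFinset m (1 : k)) ?_
  rw [← Polynomial.X_pow_sub_one_eq_prod hm0 hζ]
  rw [map_sub, map_pow, Polynomial.aeval_X, map_one, hsp, hxm, ← MonoidAlgebra.one_def, sub_self]

/-- Let `k` be algebraically closed of characteristic `p > 0` and `G` a finite
group.  Let `(P i)` be a complete set of representatives of the indecomposable projective
`kG`-modules (the projective covers of the simple `kG`-modules), so that the Cartan matrix of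
`kG` is `(c_{T,S}) = (dim_k Hom_{kG}(P T, P S))`.  Then the rank over `k` of the Cartan matrix
reduced mod `p` (its entries being cast into `k`, which has characteristic `p`) equals the
number of conjugacy classes of `p`-regular elements `x` of `G` of defect zero, i.e. with
`C_G(x)` a `p'`-group. -/
theorem stmt12 (p : ℕ) (hp : p.Prime) (k : Type) [Field k] [IsAlgClosed k] [CharP k p]
    (G : Type) [Group G] [Fintype G]
    (ι : Type) [Fintype ι] [DecidableEq ι]
    (P : ι → Type) [∀ i, AddCommGroup (P i)] [∀ i, Module k (P i)]
    [∀ i, Module (MonoidAlgebra k G) (P i)]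
    [∀ i, SMulCommClass (MonoidAlgebra k G) k (P i)]
    [∀ i, Module.Finite k (P i)]
    (hproj : ∀ i, Module.Projective (MonoidAlgebra k G) (P i))
    (hind : ∀ i, IsIndecomposableModule (MonoidAlgebra k G) (P i))
    (hpairwise : ∀ i j : ι, i ≠ j → IsEmpty (P i ≃ₗ[MonoidAlgebra k G] P j))
    (hcomplete : ∀ (M : Type) [AddCommGroup M] [Module (MonoidAlgebra k G) M],
      Module.Finite (MonoidAlgebra k G) M → Module.Projective (MonoidAlgebra k G) M →
      IsIndecomposableModule (MonoidAlgebra k G) M →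
      ∃ i, Nonempty (M ≃ₗ[MonoidAlgebra k G] P i)) :
    (Matrix.of fun T S : ι =>
        ((Module.finrank k (P T →ₗ[MonoidAlgebra k G] P S) : ℕ) : k)).rank =
      Nat.card {C : ConjClasses G // ∃ x : G, ConjClasses.mk x = C ∧
        (orderOf x).Coprime p ∧ ¬ p ∣ Nat.card ↥(Subgroup.centralizer {x})} := by
  have : Module.Finite k (MonoidAlgebra k G) := Module.Finite.of_basis (MonoidAlgebra.basis G k)
  have hart : IsArtinianRing (MonoidAlgebra k G) := IsArtinianRing.of_finite k _
  have hnt : ∀ i, Nontrivial (P i) := fun i => (hind i).1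
  choose e he hequiv using fun i => exists_idem_equiv (hproj i) (hind i).2
  have hf : ∀ i, Nonempty (P i ≃ₗ[MonoidAlgebra k G] Submodule.span (MonoidAlgebra k G) {e i}) := hequiv
  have hfin : ∀ x : MonoidAlgebra k G, Module.Finite k (Submodule.span (MonoidAlgebra k G) {x}) := fun x =>
    Module.Finite.of_injective ((Submodule.span (MonoidAlgebra k G) {x}).subtype.restrictScalars k)
      Subtype.val_injective
  have hcast : ∀ T S, ((Module.finrank k (P T →ₗ[MonoidAlgebra k G] P S) : ℕ) : k) =
      trBil k (MonoidAlgebra k G) (e T) (e S) := by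
    intro T S
    obtain ⟨f⟩ := hf S
    obtain ⟨g⟩ := hf T
    rw [exotic' (K := k) (hind S).2 f g]
    exact trForm_hom (e T) (e S) (he T) (he S)
  simp only [hcast]
  rw [gram_rank (trBil k (MonoidAlgebra k G)) trBil_symm e, trBil_rank p hp]
  intro c hc
  refine trace_zero p hp _ (fun f hf2 => ?_) fun f hf2 => trForm_nilp c f hf2
  change trForm c f = 0
  rw [trForm_chi c f hf2]
  refine chi_zero e (fun M _ _ h1 h2 h3 h4 => ?_) c (fun i => ?_) _ _ ?_ rfl
  · obtain ⟨i, ⟨q⟩⟩ := hcomplete M h1 h2 ⟨h3, h4⟩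
    obtain ⟨q2⟩ := hf i
    exact ⟨i, ⟨q.trans q2⟩⟩
  · rw [← trForm_chi c (e i) (he i)]; exact hc i
  · let pr : MonoidAlgebra k G →ₗ[MonoidAlgebra k G] Submodule.span (MonoidAlgebra k G) {f} :=
      LinearMap.toSpanSingleton _ _ ⟨f, Submodule.mem_span_singleton_self f⟩
    refine Module.Projective.of_split (Submodule.subtype _) pr ?_
    ext ⟨x, hx⟩
    obtain ⟨a, rfl⟩ := Submodule.mem_span_singleton.1 hx
    simp [pr, mul_assoc, hf2]
end
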